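/- There exists γ₀ > 0 such that for every integer p ≥ 1 and every real Λ > 0, the Markov chain (P_n)_{n≥0} started from P₀ = p satisfies ℙ_p(T₀ > Λ·p) ≤ Λ^{−γ₀}, where T₀ = inf{n ≥ 0 : P_n = 0}; in particular T₀ < ∞ ℙ_p-almost surely. -/

import Mathlib

noncomputable def nuc : ℝ := 1 + 2 * Real.sqrt 7

noncomputable def tc : ℝ := Real.sqrt 10 / (8 * (7 + Real.sqrt 7) ^ ((3:ℝ)/2))

noncomputable def uc : ℝ := (6/5) * (7 + Real.sqrt 7) * tc

/-- The rational parametrization `û` of the `u`-variable. -/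
noncomputable def uhat (H : ℂ) : ℂ :=
  ((uc : ℂ) / 3) * H * (10 - 12 * H + 6 * H ^ 2 - H ^ 3)

/-- The rational parametrization `Ẑ₀`. -/
noncomputable def Z0hat (H : ℂ) : ℂ :=
  (1/10) * (1 - (1 - (Real.sqrt 7 : ℂ)) * H + 3 * H ^ 2 - H ^ 3)
    * (10 - 12 * H + 6 * H ^ 2 - H ^ 3)

/-- The rational parametrization `Ẑ₁`. -/
noncomputable def Z1hat (H : ℂ) : ℂ :=
  (3 / (10 * (uc : ℂ))) *
    ((Real.sqrt 7 : ℂ) - 1 + H - 3 * (4 - 3 * H + H ^ 2) / (10 - 12 * H + 6 * H ^ 2 - H ^ 3))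

/-- The rational parametrization `Â`. -/
noncomputable def Ahat (H : ℂ) : ℂ :=
  (1/10) * ((((3:ℝ)/2) ^ ((7:ℝ)/3) : ℝ) : ℂ) * (9 - 8 * H + 3 * H ^ 2) / (3 - 3 * H + H ^ 2) ^ 2

open Filter Topology

/-- `f` is analytic at `0` and its Taylor coefficients there are nonnegative. -/
structure NonnegTaylor (f : ℝ → ℝ) : Prop where
  analyticAt : AnalyticAt ℝ f 0
  nonneg : ∀ n, 0 ≤ iteratedDeriv n f 0

namespace NonnegTaylor

variable {f g : ℝ → ℝ}

theorem congr (hf : NonnegTaylor f) (h : f =ᶠ[𝓝 0] g) : NonnegTaylor g :=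
  ⟨hf.analyticAt.congr h, fun n => by rw [← h.iteratedDeriv_eq n]; exact hf.nonneg n⟩

theorem const {c : ℝ} (hc : 0 ≤ c) : NonnegTaylor fun _ => c :=
  ⟨analyticAt_const, fun n => by rw [iteratedDeriv_const]; split_ifs <;> simp [hc]⟩

theorem id : NonnegTaylor fun x => x := by
  refine ⟨analyticAt_id, fun n => ?_⟩
  have h := iteratedDeriv_fun_pow_zero (𝕜 := ℝ) (n := n) (m := 1)
  simp only [pow_one] at h
  rw [h]
  split_ifs <;> simp

theorem add (hf : NonnegTaylor f) (hg : NonnegTaylor g) : NonnegTaylor fun x => f x + g x := by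
  refine ⟨hf.analyticAt.add hg.analyticAt, fun n => ?_⟩
  have h : iteratedDeriv n (f + g) 0 = _ :=
    iteratedDeriv_add hf.analyticAt.contDiffAt hg.analyticAt.contDiffAt
  exact h ▸ add_nonneg (hf.nonneg n) (hg.nonneg n)

theorem iteratedDeriv_mul_nonneg {n : ℕ} (hf : AnalyticAt ℝ f 0) (hg : AnalyticAt ℝ g 0)
    (hf' : ∀ i ≤ n, 0 ≤ iteratedDeriv i f 0) (hg' : ∀ i ≤ n, 0 ≤ iteratedDeriv i g 0) :
    0 ≤ iteratedDeriv n (f * g) 0 := by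
  rw [iteratedDeriv_mul hf.contDiffAt hg.contDiffAt]
  refine Finset.sum_nonneg fun i hi => ?_
  have hi := Finset.mem_range_succ_iff.1 hi
  exact mul_nonneg (mul_nonneg (by positivity) (hf' i hi)) (hg' _ (Nat.sub_le _ _))

theorem mul (hf : NonnegTaylor f) (hg : NonnegTaylor g) : NonnegTaylor fun x => f x * g x :=
  ⟨hf.analyticAt.mul hg.analyticAt, fun _ =>
    iteratedDeriv_mul_nonneg hf.analyticAt hg.analyticAt (fun i _ => hf.nonneg i)
      fun i _ => hg.nonneg i⟩

theorem const_mul {c : ℝ} (hc : 0 ≤ c) (hf : NonnegTaylor f) : NonnegTaylor fun x => c * f x :=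
  (const hc).mul hf

theorem pow (hf : NonnegTaylor f) (k : ℕ) : NonnegTaylor fun x => f x ^ k := by
  induction k with
  | zero => simpa using const zero_le_one
  | succ k ih => simpa only [pow_succ] using ih.mul hf

theorem deriv (hf : NonnegTaylor f) : NonnegTaylor (deriv f) :=
  ⟨hf.analyticAt.deriv, fun n => by rw [← iteratedDeriv_succ']; exact hf.nonneg _⟩

/-- The reciprocal of a positive function whose derivative has nonpositive Taylor coefficients. -/
theorem inv {d : ℝ → ℝ} (hd : AnalyticAt ℝ d 0) (hd0 : 0 < d 0)
    (hd' : NonnegTaylor fun x => -_root_.deriv d x) : NonnegTaylor fun x => (d x)⁻¹ := by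
  have han : AnalyticAt ℝ (fun x => (d x)⁻¹) 0 := hd.inv hd0.ne'
  set f : ℝ → ℝ := fun x => (d x)⁻¹
  have hderiv : _root_.deriv f =ᶠ[𝓝 0] (f * f) * fun x => -_root_.deriv d x := by
    filter_upwards [hd.eventually_analyticAt, hd.continuousAt.eventually_ne hd0.ne'] with x hx hx0
    have := (hx.differentiableAt.hasDerivAt.inv hx0).deriv
    simp only [Pi.mul_apply, f]
    refine this.trans ?_
    field_simp
  refine ⟨han, fun n => ?_⟩
  induction n using Nat.strong_induction_on with
  | _ n ih =>
    cases n with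
    | zero => simpa [f] using hd0.le
    | succ n =>
      rw [iteratedDeriv_succ', hderiv.iteratedDeriv_eq n]
      refine iteratedDeriv_mul_nonneg (han.mul han) hd'.analyticAt (fun i hi => ?_)
        fun i _ => hd'.nonneg i
      exact iteratedDeriv_mul_nonneg han han (fun j hj => ih j (by omega))
        fun j hj => ih j (by omega)

/-- The reciprocal of `b - k * x ^ m`. -/
theorem inv_sub_mul_pow {b k : ℝ} (hb : 0 < b) (hk : 0 ≤ k) (m : ℕ) :
    NonnegTaylor fun x => (b - k * x ^ (m + 1))⁻¹ := by
  refine inv (by fun_prop) (by simpa using hb) ?_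
  have h : (fun x : ℝ => -_root_.deriv (fun x => b - k * x ^ (m + 1)) x)
      = fun x => k * (m + 1) * x ^ m := by
    ext x
    have h1 := (((hasDerivAt_id x).pow (m + 1)).const_mul k).const_sub b
    have h2 : _root_.deriv (fun x => b - k * x ^ (m + 1)) x = _ := h1.deriv
    rw [h2]
    simp
    ring
  rw [h]
  exact (id.pow m).const_mul (by positivity)

/-- If `F ∘ φ` has nonnegative Taylor coefficients, then so does `F`, provided that `1 / φ'` has
nonnegative Taylor coefficients. -/
theorem of_comp {φ : ℝ → ℝ} (hφ : AnalyticAt ℝ φ 0) (hφ0 : φ 0 = 0)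
    (hφ' : NonnegTaylor fun x => (_root_.deriv φ x)⁻¹) (hφ1 : _root_.deriv φ 0 ≠ 0)
    {F m : ℝ → ℝ} (hF : AnalyticAt ℝ F 0)
    (hm : NonnegTaylor m) (h : ∀ᶠ x in 𝓝 0, F (φ x) = m x) : NonnegTaylor F := by
  refine ⟨hF, fun n => ?_⟩
  induction n generalizing F m with
  | zero => simpa [← h.self_of_nhds, hφ0] using hm.nonneg 0
  | succ n ih =>
    rw [iteratedDeriv_succ']
    refine ih hF.deriv (hm.deriv.mul hφ') ?_
    have hFφ : ∀ᶠ x in 𝓝 0, AnalyticAt ℝ F (φ x) :=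
      hφ.continuousAt.eventually (by simpa [hφ0] using hF.eventually_analyticAt)
    filter_upwards [h.eventually_nhds, hFφ, hφ.eventually_analyticAt,
      hφ.deriv.continuousAt.eventually_ne hφ1] with x hx hFx hφx hx1
    have h1 := (hFx.differentiableAt.hasDerivAt.comp x hφx.differentiableAt.hasDerivAt).deriv
    have h2 : _root_.deriv (F ∘ φ) x = _root_.deriv m x := Filter.EventuallyEq.deriv_eq hx
    rw [← h2, h1]
    field_simp

end NonnegTaylor

/-- `f` has a majorant `g` (coefficientwise at `0`) such that `(C - g x) / (1 - x)` has nonnegative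
Taylor coefficients for some constant `C`: informally, the Taylor coefficients of `f` are absolutely
summable. -/
def SummableTaylor (f : ℝ → ℝ) : Prop :=
  ∃ g : ℝ → ℝ, NonnegTaylor g ∧ (NonnegTaylor fun x => g x - f x) ∧
    (NonnegTaylor fun x => g x + f x) ∧
    ∃ C : ℝ, 0 ≤ C ∧ NonnegTaylor fun x => (C - g x) * (1 - x)⁻¹

theorem nonnegTaylor_inv_one_sub : NonnegTaylor fun x => (1 - x)⁻¹ := by
  simpa using NonnegTaylor.inv_sub_mul_pow one_pos zero_le_one 0

namespace SummableTaylor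

variable {f g : ℝ → ℝ}

theorem neg (hf : SummableTaylor f) : SummableTaylor fun x => -f x := by
  obtain ⟨u, hu, h1, h2, h3⟩ := hf
  exact ⟨u, hu, by simpa using h2, by simpa [sub_eq_add_neg] using h1, h3⟩

theorem const (c : ℝ) : SummableTaylor fun _ => c := by
  refine ⟨fun _ => |c|, .const (abs_nonneg c), .const ?_, .const ?_, |c|, abs_nonneg c, ?_⟩
  · linarith [le_abs_self c]
  · linarith [neg_abs_le c]
  · simpa using NonnegTaylor.const le_rfl

theorem id : SummableTaylor fun x => x := by
  refine ⟨fun x => x, .id, by simpa using NonnegTaylor.const le_rfl, NonnegTaylor.id.add .id,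
    1, zero_le_one, (NonnegTaylor.const zero_le_one).congr ?_⟩
  filter_upwards [eventually_ne_nhds (zero_ne_one (α := ℝ))] with x hx
  rw [mul_inv_cancel₀ (sub_ne_zero.2 hx.symm)]

theorem add (hf : SummableTaylor f) (hg : SummableTaylor g) :
    SummableTaylor fun x => f x + g x := by
  obtain ⟨u, hu, h1, h2, C, hC, h3⟩ := hf
  obtain ⟨v, hv, k1, k2, D, hD, k3⟩ := hg
  refine ⟨fun x => u x + v x, hu.add hv, ?_, ?_, C + D, by positivity, ?_⟩
  · convert! h1.add k1 using 2; ring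
  · convert! h2.add k2 using 2; ring
  · convert! h3.add k3 using 2; ring

theorem mul (hf : SummableTaylor f) (hg : SummableTaylor g) :
    SummableTaylor fun x => f x * g x := by
  obtain ⟨u, hu, h1, h2, C, hC, h3⟩ := hf
  obtain ⟨v, hv, k1, k2, D, hD, k3⟩ := hg
  refine ⟨fun x => u x * v x, hu.mul hv, ?_, ?_, C * D, by positivity, ?_⟩
  · convert! ((h1.mul k2).add (h2.mul k1)).const_mul (c := 1 / 2) (by norm_num) using 2; ring
  · convert! ((h1.mul k1).add (h2.mul k2)).const_mul (c := 1 / 2) (by norm_num) using 2; ring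
  · convert! (k3.const_mul hC).add (h3.mul hv) using 2; ring

theorem pow (hf : SummableTaylor f) (k : ℕ) : SummableTaylor fun x => f x ^ k := by
  induction k with
  | zero => simpa using const 1
  | succ k ih => simpa only [pow_succ] using ih.mul hf

theorem inv_add_pow_six : SummableTaylor fun x => (27 + x ^ 6)⁻¹ := by
  have hne : ∀ᶠ x : ℝ in 𝓝 0, 27 - x ^ 6 ≠ 0 ∧ 27 + x ^ 6 ≠ 0 ∧ 1 - x ≠ 0 := by
    refine ((ContinuousAt.eventually_ne (by fun_prop) (by norm_num)).and
      ((ContinuousAt.eventually_ne (by fun_prop) (by norm_num)).and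
      (ContinuousAt.eventually_ne (by fun_prop) (by norm_num))))
  have hg : NonnegTaylor fun x => (27 - x ^ 6)⁻¹ := by
    simpa using NonnegTaylor.inv_sub_mul_pow (b := 27) (by norm_num) zero_le_one 5
  have hk : NonnegTaylor fun x => (729 - x ^ 12)⁻¹ := by
    simpa using NonnegTaylor.inv_sub_mul_pow (b := 729) (by norm_num) zero_le_one 11
  have hfac : ∀ x : ℝ, 729 - x ^ 12 = (27 - x ^ 6) * (27 + x ^ 6) := fun x => by ring
  refine ⟨_, hg, ?_, ?_, 1 / 26, by norm_num, ?_⟩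
  · refine (((NonnegTaylor.id.pow 6).const_mul (c := 2) (by norm_num)).mul hk).congr ?_
    filter_upwards [hne] with x ⟨h1, h2, h3⟩
    rw [hfac]
    field_simp
    ring
  · refine (hk.const_mul (c := 54) (by norm_num)).congr ?_
    filter_upwards [hne] with x ⟨h1, h2, h3⟩
    rw [hfac]
    field_simp
    ring
  · have hp : NonnegTaylor fun x => 1 + x + x ^ 2 + x ^ 3 + x ^ 4 + x ^ 5 :=
      (((((NonnegTaylor.const zero_le_one).add .id).add (NonnegTaylor.id.pow 2)).add
        (NonnegTaylor.id.pow 3)).add (NonnegTaylor.id.pow 4)).add (NonnegTaylor.id.pow 5)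
    refine ((hp.mul hg).const_mul (c := 1 / 26) (by norm_num)).congr ?_
    filter_upwards [hne] with x ⟨h1, h2, h3⟩
    field_simp
    ring

theorem inv_quadratic : SummableTaylor fun x => (3 - 3 * x + x ^ 2)⁻¹ := by
  have h : SummableTaylor fun x => (9 + 9 * x + 6 * x ^ 2 + 3 * x ^ 3 + x ^ 4) * (27 + x ^ 6)⁻¹ :=
    (((((const 9).add ((const 9).mul id)).add ((const 6).mul (id.pow 2))).add
      ((const 3).mul (id.pow 3))).add (id.pow 4)).mul inv_add_pow_six
  convert! h using 2 with x
  have h1 : 3 - 3 * x + x ^ 2 ≠ 0 := by nlinarith [sq_nonneg (2 * x - 3)]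
  have h2 : 27 + x ^ 6 ≠ 0 := by positivity
  rw [inv_eq_one_div, ← div_eq_mul_inv, div_eq_div_iff h1 h2]
  ring

/-- A function with absolutely summable Taylor coefficients has bounded partial sums. -/
theorem exists_const_sub (hf : SummableTaylor f) :
    ∃ C : ℝ, 0 < C ∧ NonnegTaylor fun x => (C - f x) * (1 - x)⁻¹ := by
  obtain ⟨g, -, h1, -, C, hC, h3⟩ := hf
  refine ⟨C + 1, by positivity, ?_⟩
  convert! (h3.add (h1.mul nonnegTaylor_inv_one_sub)).add nonnegTaylor_inv_one_sub using 2
  ring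

end SummableTaylor

/-- The restriction of `uhat` to the real line. -/
noncomputable def uReal (x : ℝ) : ℝ := uc / 3 * x * (10 - 12 * x + 6 * x ^ 2 - x ^ 3)

/-- The restriction of `Z0hat` to the real line. -/
noncomputable def Z0Real (x : ℝ) : ℝ :=
  (1 / 10) * (1 - (1 - √7) * x + 3 * x ^ 2 - x ^ 3) * (10 - 12 * x + 6 * x ^ 2 - x ^ 3)

/-- The restriction of `Z1hat` to the real line. -/
noncomputable def Z1Real (x : ℝ) : ℝ :=
  (3 / (10 * uc)) * (√7 - 1 + x - 3 * (4 - 3 * x + x ^ 2) / (10 - 12 * x + 6 * x ^ 2 - x ^ 3))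

/-- The restriction of `Ahat` to the real line. -/
noncomputable def AReal (x : ℝ) : ℝ :=
  (1 / 10) * ((3 : ℝ) / 2) ^ ((7 : ℝ) / 3) * (9 - 8 * x + 3 * x ^ 2) / (3 - 3 * x + x ^ 2) ^ 2

theorem uhat_ofReal (x : ℝ) : uhat x = uReal x := by
  simp [uhat, uReal]

theorem Z0hat_ofReal (x : ℝ) : Z0hat x = Z0Real x := by
  simp [Z0hat, Z0Real]

theorem Z1hat_ofReal (x : ℝ) : Z1hat x = Z1Real x := by
  simp [Z1hat, Z1Real]

theorem Ahat_ofReal (x : ℝ) : Ahat x = AReal x := by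
  simp only [Ahat, AReal]
  push_cast
  rfl

theorem tc_pos : 0 < tc := by unfold tc; positivity

theorem uc_pos : 0 < uc := by
  have := tc_pos
  unfold uc
  positivity

theorem nuc_pos : 0 < nuc := by unfold nuc; positivity

theorem one_lt_nuc : 1 < nuc := by
  have : 0 < √7 := by positivity
  unfold nuc
  linarith

theorem hasDerivAt_uReal (x : ℝ) :
    HasDerivAt uReal (2 * uc / 3 * (1 - x) ^ 2 * (5 - 2 * x)) x := by
  have h1 := (((hasDerivAt_id x).const_mul 12).const_sub 10).add
    (((hasDerivAt_id x).pow 2).const_mul 6)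
  have h2 := (h1.sub ((hasDerivAt_id x).pow 3))
  have h3 := ((hasDerivAt_id x).const_mul (uc / 3)).mul h2
  refine h3.congr_deriv ?_
  simp
  ring

theorem deriv_uReal (x : ℝ) : deriv uReal x = 2 * uc / 3 * (1 - x) ^ 2 * (5 - 2 * x) :=
  (hasDerivAt_uReal x).deriv

theorem analyticAt_uReal : AnalyticAt ℝ uReal 0 := by
  unfold uReal
  fun_prop

theorem uReal_zero : uReal 0 = 0 := by simp [uReal]

theorem eventually_uReal_ne_zero : ∀ᶠ x in 𝓝[≠] (0 : ℝ), uReal x ≠ 0 := by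
  have h := (hasDerivAt_uReal 0).eventually_ne (c := 0) (by have := uc_pos; positivity)
  simpa using h

theorem nonnegTaylor_inv_five_sub : NonnegTaylor fun x => (5 - 2 * x)⁻¹ := by
  simpa using NonnegTaylor.inv_sub_mul_pow (b := 5) (k := 2) (by norm_num) (by norm_num) 0

theorem nonnegTaylor_inv_deriv_uReal : NonnegTaylor fun x => (deriv uReal x)⁻¹ := by
  have := uc_pos
  have h := ((nonnegTaylor_inv_one_sub.pow 2).mul nonnegTaylor_inv_five_sub).const_mul
    (c := (2 * uc / 3)⁻¹) (by positivity)
  convert! h using 2 with x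
  rw [deriv_uReal]
  simp only [mul_inv, inv_pow, mul_assoc]

/-- A power series in `uReal x` is an analytic function of `uReal x`. -/
theorem exists_analyticAt_of_hasSum {b : ℕ → ℝ} {φ : ℝ → ℝ}
    (h : ∀ᶠ x in 𝓝[≠] (0 : ℝ), HasSum (fun n => b n * uReal x ^ n) (φ x)) :
    ∃ F : ℝ → ℝ, AnalyticAt ℝ F 0 ∧ (∀ n, iteratedDeriv n F 0 = n.factorial * b n) ∧
      ∀ᶠ x in 𝓝[≠] (0 : ℝ), F (uReal x) = φ x := by
  obtain ⟨x₀, hx₀, hne⟩ := (h.and eventually_uReal_ne_zero).exists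
  have hps : HasFPowerSeriesAt (fun u => ∑' n, b n * u ^ n)
      (FormalMultilinearSeries.ofScalars ℝ b) 0 := by
    rw [hasFPowerSeriesAt_iff]
    filter_upwards [Metric.ball_mem_nhds (0 : ℝ) (norm_pos_iff.2 hne)] with u hu
    have hs := summable_powerSeries_of_norm_lt (f := b)
      hx₀.summable.hasSum.tendsto_sum_nat.cauchySeq (mem_ball_zero_iff.1 hu)
    simpa [FormalMultilinearSeries.coeff_ofScalars, mul_comm] using hs.hasSum
  refine ⟨_, hps.analyticAt, fun n => ?_, ?_⟩
  · have h1 := hps.analyticAt.hasFPowerSeriesAt.eq_formalMultilinearSeries hps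
    have h2 := congrArg (fun p => FormalMultilinearSeries.coeff p n) h1
    simp only [FormalMultilinearSeries.coeff_ofScalars] at h2
    rw [← h2]
    field_simp
  · filter_upwards [h] with x hx using hx.tsum_eq

theorem exists_analyticAt_of_hasSum_of_continuousAt {b : ℕ → ℝ} {φ : ℝ → ℝ}
    (hφ : ContinuousAt φ 0)
    (h : ∀ᶠ x in 𝓝[≠] (0 : ℝ), HasSum (fun n => b n * uReal x ^ n) (φ x)) :
    ∃ F : ℝ → ℝ, AnalyticAt ℝ F 0 ∧ (∀ n, iteratedDeriv n F 0 = n.factorial * b n) ∧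
      ∀ᶠ x in 𝓝 (0 : ℝ), F (uReal x) = φ x := by
  obtain ⟨F, hF, hF', hFφ⟩ := exists_analyticAt_of_hasSum h
  refine ⟨F, hF, hF', ?_⟩
  have hc : ContinuousAt (fun x => F (uReal x)) 0 :=
    ContinuousAt.comp (g := F) (by rw [uReal_zero]; exact hF.continuousAt)
      analyticAt_uReal.continuousAt
  exact (hc.eventuallyEq_nhds_iff_eventuallyEq_nhdsNE hφ).1 hFφ

theorem eventually_deriv_comp_uReal {F m m' : ℝ → ℝ} (hF : AnalyticAt ℝ F 0)
    (h : ∀ᶠ x in 𝓝 (0 : ℝ), F (uReal x) = m x) (hm : ∀ᶠ x in 𝓝 (0 : ℝ), HasDerivAt m (m' x) x) :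
    ∀ᶠ x in 𝓝 (0 : ℝ), deriv F (uReal x) * (2 * uc / 3 * (1 - x) ^ 2 * (5 - 2 * x)) = m' x := by
  have hFφ : ∀ᶠ x in 𝓝 0, AnalyticAt ℝ F (uReal x) :=
    analyticAt_uReal.continuousAt.eventually
      (by simpa [uReal_zero] using hF.eventually_analyticAt)
  filter_upwards [h.eventually_nhds, hFφ, hm] with x hx hFx hmx
  have h1 := hFx.differentiableAt.hasDerivAt.comp x (hasDerivAt_uReal x)
  exact h1.unique (hmx.congr_of_eventuallyEq hx)

/-- The derivative of `Z₀` in the rational parametrization. -/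
noncomputable def dZ0Real (x : ℝ) : ℝ :=
  1 / uc * (3 * (2 + √7) / 10
    - 9 / 20 * ((1 - x) ^ 2 + (1 - x) + 1 / 2 + 3 / 2 * (5 - 2 * x)⁻¹))

theorem eventually_ne_zero : ∀ᶠ x : ℝ in 𝓝 0, 5 - 2 * x ≠ 0 ∧ 1 - x ≠ 0 :=
  (ContinuousAt.eventually_ne (by fun_prop) (by norm_num)).and
    (ContinuousAt.eventually_ne (by fun_prop) (by norm_num))

theorem hasDerivAt_Z0Real {x : ℝ} (hx : 5 - 2 * x ≠ 0) :
    HasDerivAt Z0Real (dZ0Real x * (2 * uc / 3 * (1 - x) ^ 2 * (5 - 2 * x))) x := by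
  have hid := hasDerivAt_id x
  have h1 := ((((hid.const_mul 12).const_sub 10).add ((hid.pow 2).const_mul 6)).sub (hid.pow 3))
  have h2 := (((hid.const_mul (1 - √7)).const_sub 1).add ((hid.pow 2).const_mul 3)).sub (hid.pow 3)
  refine ((h2.const_mul (1 / 10)).mul h1).congr_deriv ?_
  have := uc_pos.ne'
  simp [dZ0Real]
  field_simp
  ring

theorem hasDerivAt_dZ0Real {x : ℝ} (hx : 5 - 2 * x ≠ 0) :
    HasDerivAt dZ0Real (9 / (20 * uc) * (3 - 2 * x - 3 * ((5 - 2 * x)⁻¹) ^ 2)) x := by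
  have hid := hasDerivAt_id x
  have h1 := (((hid.const_mul 2).const_sub 5).inv hx).const_mul (3 / 2)
  have h2 := ((((hid.const_sub 1).pow 2).add (hid.const_sub 1)).add_const (1 / 2)).add h1
  refine (((h2.const_mul (9 / 20)).const_sub (3 * (2 + √7) / 10)).const_mul (1 / uc)).congr_deriv ?_
  have := uc_pos.ne'
  simp
  field_simp
  ring

theorem hasDerivAt_AReal (x : ℝ) :
    HasDerivAt AReal ((1 / 10) * ((3 : ℝ) / 2) ^ ((7 : ℝ) / 3)
      * (6 * (5 - 7 * x + 4 * x ^ 2 - x ^ 3) * ((3 - 3 * x + x ^ 2)⁻¹) ^ 3)) x := by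
  have hid := hasDerivAt_id x
  have h0 : 3 - 3 * x + x ^ 2 ≠ 0 := by nlinarith [sq_nonneg (2 * x - 3)]
  have h1 := (((hid.const_mul 3).const_sub 3).add (hid.pow 2)).pow 2
  have h2 := ((hid.const_mul 8).const_sub 9).add ((hid.pow 2).const_mul 3)
  refine ((h2.const_mul ((1 / 10) * ((3 : ℝ) / 2) ^ ((7 : ℝ) / 3))).div h1
    (by simpa using h0)).congr_deriv ?_
  simp
  field_simp
  ring

/-- The Taylor coefficients of `A` are dominated by those of the derivative of `Z₀`. -/
theorem exists_mul_coeff_le {b a : ℕ → ℝ}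
    (hb : ∀ᶠ x in 𝓝[≠] (0 : ℝ), HasSum (fun n => b n * uReal x ^ n) (Z0Real x))
    (ha : ∀ᶠ x in 𝓝[≠] (0 : ℝ), HasSum (fun n => a n * uReal x ^ n) (AReal x)) :
    ∃ c : ℝ, 0 < c ∧ ∀ n, 1 ≤ n → c * a n ≤ (n + 1) * b (n + 1) := by
  have huc := uc_pos
  obtain ⟨F, hF, hF', hFφ⟩ := exists_analyticAt_of_hasSum_of_continuousAt
    (hasDerivAt_Z0Real (by norm_num)).continuousAt hb
  obtain ⟨A, hA, hA', hAφ⟩ := exists_analyticAt_of_hasSum_of_continuousAt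
    (hasDerivAt_AReal 0).continuousAt ha
  set k : ℝ := (1 / 10) * ((3 : ℝ) / 2) ^ ((7 : ℝ) / 3) with hk
  have hkpos : 0 < k := by positivity
  set β : ℝ → ℝ := fun x => 6 * (5 - 7 * x + 4 * x ^ 2 - x ^ 3) * ((3 - 3 * x + x ^ 2)⁻¹) ^ 3
    with hβ
  have hβs : SummableTaylor β := by
    have h := (((SummableTaylor.const 6).mul ((((SummableTaylor.const 5).add
      ((SummableTaylor.const (-7)).mul .id)).add
      ((SummableTaylor.const 4).mul (SummableTaylor.id.pow 2))).add
      (SummableTaylor.id.pow 3).neg)).mul (SummableTaylor.inv_quadratic.pow 3))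
    convert! h using 2
    simp only [hβ]
    ring
  obtain ⟨C, hC, hCβ⟩ := hβs.exists_const_sub
  set c : ℝ := 3 / (10 * uc) / (k * C) with hc
  have hcpos : 0 < c := by positivity
  refine ⟨c, hcpos, ?_⟩
  have hdF : ∀ᶠ x in 𝓝 (0 : ℝ), deriv F (uReal x) = dZ0Real x := by
    have h1 := eventually_deriv_comp_uReal hF hFφ
      (eventually_ne_zero.mono fun x hx => hasDerivAt_Z0Real hx.1)
    filter_upwards [h1, eventually_ne_zero] with x hx ⟨h5, h1⟩
    exact mul_right_cancel₀ (by positivity) hx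
  set E : ℝ → ℝ := fun u => deriv F u + (-c) * A u with hE
  have hEan : AnalyticAt ℝ E 0 := hF.deriv.add (analyticAt_const.mul hA)
  have hEφ : ∀ᶠ x in 𝓝 (0 : ℝ), E (uReal x) = dZ0Real x + (-c) * AReal x := by
    filter_upwards [hdF, hAφ] with x h1 h2
    rw [hE]
    simp only [h1, h2]
  have hdE := eventually_deriv_comp_uReal hEan hEφ
    (eventually_ne_zero.mono fun x hx =>
      (hasDerivAt_dZ0Real hx.1).add ((hasDerivAt_AReal x).const_mul (-c)))
  have hm : NonnegTaylor (deriv E) := by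
    have hmain := ((nonnegTaylor_inv_five_sub.mul nonnegTaylor_inv_one_sub).mul
      ((((NonnegTaylor.const (c := 2) (by norm_num)).add
        ((nonnegTaylor_inv_five_sub.const_mul (c := 2 / 3) (by norm_num)).add
          ((nonnegTaylor_inv_five_sub.pow 2).const_mul (c := 2) (by norm_num)))).const_mul
            (c := 9 / (20 * uc)) (by positivity)).add
        (hCβ.const_mul (c := c * k) (by positivity)))).const_mul (c := 3 / (2 * uc))
        (by positivity)
    refine NonnegTaylor.of_comp analyticAt_uReal uReal_zero nonnegTaylor_inv_deriv_uReal
      (by rw [deriv_uReal]; positivity) hEan.deriv hmain ?_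
    filter_upwards [hdE, eventually_ne_zero] with x hx ⟨h5, h1⟩
    refine mul_right_cancel₀ (b := 2 * uc / 3 * (1 - x) ^ 2 * (5 - 2 * x)) (by positivity) ?_
    rw [hx]
    have hkc : c * k * (C - β x) = 3 / (10 * uc) - c * k * β x := by
      rw [hc]; field_simp
    rw [← mul_assoc (c * k), hkc]
    change _ + -c * (k * β x) = _
    field_simp
    ring
  intro n hn
  obtain ⟨n, rfl⟩ := Nat.exists_eq_add_of_le' hn
  have h := hm.nonneg n
  rw [← iteratedDeriv_succ'] at h
  have h2 : iteratedDeriv (n + 1) E 0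
      = iteratedDeriv (n + 2) F 0 + (-c) * iteratedDeriv (n + 1) A 0 := by
    have h3 : iteratedDeriv (n + 1) (deriv F + fun u => (-c) * A u) 0 = _ :=
      iteratedDeriv_add hF.deriv.contDiffAt (analyticAt_const.mul hA).contDiffAt
    rw [iteratedDeriv_succ' (n := n + 1)]
    refine h3.trans ?_
    rw [iteratedDeriv_const_mul_field]
  rw [h2, hF', hA', Nat.factorial_succ (n + 1)] at h
  have hpos : (0 : ℝ) < (n + 1).factorial := by positivity
  push_cast at h ⊢
  have h4 : 0 ≤ ((n + 1).factorial : ℝ) * ((n + 1 + 1) * b (n + 1 + 1) - c * a (n + 1)) := by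
    linarith
  linarith [nonneg_of_mul_nonneg_right h4 hpos]

theorem hasDerivAt_Z1Real_zero : HasDerivAt Z1Real (69 / (500 * uc)) 0 := by
  have hid := hasDerivAt_id (0 : ℝ)
  have h1 := ((((hid.const_mul 12).const_sub 10).add ((hid.pow 2).const_mul 6)).sub (hid.pow 3))
  have h2 := ((((hid.const_mul 3).const_sub 4).add (hid.pow 2)).const_mul 3).div h1 (by norm_num)
  refine (((hid.const_add (√7 - 1)).sub h2).const_mul (3 / (10 * uc))).congr_deriv ?_
  have := uc_pos.ne'
  simp
  field_simp
  norm_num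

theorem Z0Real_zero : Z0Real 0 = 1 := by norm_num [Z0Real]

/-- For fixed `v = uReal y`, the coefficient of `u` in `Z(u, v)` is `Z₁(v)`. -/
theorem hasSum_coeff_one {z : ℕ → ℕ → ℝ} {y : ℝ} (hy : uReal y ≠ 0)
    (h : ∀ᶠ x in 𝓝[≠] (0 : ℝ), ∃ Z : ℝ,
      HasSum (fun pq : ℕ × ℕ => z pq.1 pq.2 * uReal x ^ pq.1 * uReal y ^ pq.2) Z ∧
      (nuc * uReal y * uReal x - uReal x ^ 2
          - (nuc ^ 2 - 1) * tc * uReal y * (Z0Real x + uReal x * Z1Real y)) * (Z - Z0Real y)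
        = uReal x ^ 2 * (Z0Real y - Z0Real x)
          + (nuc ^ 2 - 1) * uReal x * uReal y * (uReal x ^ 2 - tc * Z0Real x * Z1Real y)) :
    HasSum (fun q => z 1 q * uReal y ^ q) (Z1Real y) := by
  obtain ⟨x₀, ⟨Z, hZ, -⟩, hne⟩ := (h.and eventually_uReal_ne_zero).exists
  have hsum : ∀ p, Summable fun q => z p q * uReal y ^ q := by
    intro p
    have h1 := (hZ.summable.prod_factor p).mul_left (uReal x₀ ^ p)⁻¹
    refine h1.congr fun q => ?_
    field_simp
  set w : ℕ → ℝ := fun p => ∑' q, z p q * uReal y ^ q with hw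
  have hfib : ∀ x Z, HasSum (fun pq : ℕ × ℕ => z pq.1 pq.2 * uReal x ^ pq.1 * uReal y ^ pq.2) Z →
      HasSum (fun p => w p * uReal x ^ p) Z := by
    intro x Z hZ
    refine hZ.prod_fiberwise fun p => ?_
    convert! (hsum p).hasSum.mul_right (uReal x ^ p) using 2
    ring
  have hser : ∀ᶠ x in 𝓝[≠] (0 : ℝ),
      HasSum (fun p => w p * uReal x ^ p) (∑' p, w p * uReal x ^ p) := by
    filter_upwards [h] with x ⟨Z, hZ, _⟩ using (hfib x Z hZ).summable.hasSum
  obtain ⟨F, hF, hF', hFφ⟩ := exists_analyticAt_of_hasSum hser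
  have huc := uc_pos
  have hF0 : F 0 = w 0 := by simpa using hF' 0
  have hF1 : deriv F 0 = w 1 := by simpa using hF' 1
  have hdu := hasDerivAt_uReal 0
  have hdZ := hasDerivAt_Z0Real (x := 0) (by norm_num)
  have hdF : HasDerivAt (fun x => F (uReal x)) _ 0 :=
    HasDerivAt.comp (0 : ℝ) (by rw [uReal_zero]; exact hF.differentiableAt.hasDerivAt) hdu
  set d : ℝ := 2 * uc / 3 * (1 - 0) ^ 2 * (5 - 2 * 0) with hd
  have hd0 : d ≠ 0 := by rw [hd]; positivity
  have hL := (((hdu.const_mul (nuc * uReal y)).sub (hdu.pow 2)).sub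
    ((hdZ.add (hdu.mul_const (Z1Real y))).const_mul ((nuc ^ 2 - 1) * tc * uReal y))).mul
    (hdF.sub_const (Z0Real y))
  have hR := ((hdu.pow 2).mul (hdZ.const_sub (Z0Real y))).add
    (((hdu.const_mul (nuc ^ 2 - 1)).mul_const (uReal y)).mul
      ((hdu.pow 2).sub ((hdZ.const_mul tc).mul_const (Z1Real y))))
  have heq := (hL.continuousAt.eventuallyEq_nhds_iff_eventuallyEq_nhdsNE hR.continuousAt).1 (by
    filter_upwards [h, hFφ] with x ⟨Z, hZ, hx⟩ hFx
    rw [(hfib x Z hZ).tsum_eq] at hFx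
    simpa [hFx] using hx)
  have hcoef : (nuc ^ 2 - 1) * tc * uReal y ≠ 0 := by
    have := one_lt_nuc
    have := tc_pos
    have : 0 < nuc ^ 2 - 1 := by nlinarith
    positivity
  have h0 := heq.self_of_nhds
  simp [uReal_zero, Z0Real_zero, hF0] at h0
  have hw0 : w 0 - Z0Real y = 0 := by
    rcases h0 with h0 | h0
    · exact absurd h0 (by simpa using hcoef)
    · exact h0
  have h1 := hL.unique (hR.congr_of_eventuallyEq heq)
  simp [uReal_zero, Z0Real_zero, hF0, hF1, hw0] at h1
  have hw1 : w 1 = Z1Real y := by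
    refine mul_left_cancel₀ (mul_ne_zero hcoef hd0) ?_
    linarith
  exact hw1 ▸ (hsum 1).hasSum

theorem coeff_one_pos {b : ℕ → ℝ}
    (hb : ∀ᶠ y in 𝓝[≠] (0 : ℝ), HasSum (fun q => b q * uReal y ^ q) (Z1Real y)) : 0 < b 1 := by
  have huc := uc_pos
  obtain ⟨F, hF, hF', hFφ⟩ := exists_analyticAt_of_hasSum_of_continuousAt
    hasDerivAt_Z1Real_zero.continuousAt hb
  have hF1 : deriv F 0 = b 1 := by simpa using hF' 1
  have hdF : HasDerivAt (fun x => F (uReal x)) _ 0 :=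
    HasDerivAt.comp (0 : ℝ) (by rw [uReal_zero]; exact hF.differentiableAt.hasDerivAt)
      (hasDerivAt_uReal 0)
  have h1 := hdF.unique (hasDerivAt_Z1Real_zero.congr_of_eventuallyEq hFφ)
  rw [hF1] at h1
  have h2 : 0 < b 1 * (2 * uc / 3 * (1 - 0) ^ 2 * (5 - 2 * 0)) := h1 ▸ (by positivity)
  exact pos_of_mul_pos_left h2 (by positivity)

theorem path_le_of_prod_ne_zero {K : ℕ → ℕ → ℝ} (hK : ∀ p q, p + 2 < q → K p q = 0)
    (s : ℕ → ℕ) (n : ℕ) (h : ∏ i ∈ Finset.range n, K (s i) (s (i + 1)) ≠ 0) :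
    s n ≤ s 0 + 2 * n := by
  induction n with
  | zero => simp
  | succ n ih =>
    rw [Finset.prod_range_succ] at h
    have h1 := ih (left_ne_zero_of_mul h)
    have h2 : s (n + 1) ≤ s n + 2 := by
      by_contra hlt
      exact right_ne_zero_of_mul h (hK _ _ (by omega))
    omega

/-- The trajectories that avoid `0` up to time `n`. -/
def aliveUpTo (n : ℕ) : Set (ℕ → ℕ) := {ω | ∀ i ≤ n, ω i ≠ 0}

theorem measurableSet_aliveUpTo (n : ℕ) : MeasurableSet (aliveUpTo n) := by
  have h : aliveUpTo n = ⋂ i, ⋂ (_ : i ≤ n), (fun ω : ℕ → ℕ => ω i) ⁻¹' {0}ᶜ := by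
    ext ω
    simp [aliveUpTo]
  rw [h]
  exact .iInter fun i => .iInter fun _ => measurable_pi_apply i (MeasurableSet.of_discrete)

section Chain

variable {K : ℕ → ℕ → ℝ} {p : ℕ} {μ : MeasureTheory.Measure (ℕ → ℕ)}

/-- A chain whose increments are at most `2` and that can be absorbed in two steps through `1`
survives two more steps with probability at most `1 - c / (p + 2 n + 1)`. -/
theorem measure_aliveUpTo_add_two_le [MeasureTheory.IsProbabilityMeasure μ]
    (hnn : ∀ p q, 0 ≤ K p q) (hK : ∀ p q, p + 2 < q → K p q = 0)
    {c : ℝ} (hc : 0 ≤ c) (hcK : ∀ p : ℕ, 1 ≤ p → c / (p + 1) ≤ K p 1 * K 1 0)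
    (hchain : ∀ n : ℕ, ∀ s : ℕ → ℕ, μ {ω : ℕ → ℕ | ∀ i ≤ n, ω i = s i}
        = ENNReal.ofReal ((if s 0 = p then 1 else 0)
            * ∏ i ∈ Finset.range n, K (s i) (s (i + 1)))) (n : ℕ) :
    μ.real (aliveUpTo (n + 2)) ≤ (1 - c / (p + 2 * n + 1)) * μ.real (aliveUpTo n) := by
  set B : Set (ℕ → ℕ) := {ω | ω (n + 1) = 1 ∧ ω (n + 2) = 0} with hB
  have hBm : MeasurableSet B :=
    (measurable_pi_apply (n + 1) (MeasurableSet.of_discrete (s := {1}))).inter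
      (measurable_pi_apply (n + 2) (MeasurableSet.of_discrete (s := {0})))
  set X : (ℕ → ℕ) → (Fin (n + 1) → ℕ) := fun ω i => ω i with hX
  have hXm : Measurable X := measurable_pi_lambda _ fun i => measurable_pi_apply _
  set S : Set (Fin (n + 1) → ℕ) := {s | ∀ i, s i ≠ 0} with hS
  have halive : aliveUpTo n = X ⁻¹' S := by
    ext ω
    simp only [aliveUpTo, Set.mem_ofPred_eq, hX, hS, Set.mem_preimage]
    exact ⟨fun h i => h i (Nat.lt_succ_iff.1 i.2), fun h i hi => h ⟨i, Nat.lt_succ_iff.2 hi⟩⟩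
  have hcyl : ∀ s ∈ S, ENNReal.ofReal (c / (p + 2 * n + 1)) * μ (X ⁻¹' {s})
      ≤ (μ.restrict B) (X ⁻¹' {s}) := by
    intro s hs
    set e : ℕ → ℕ := fun i => if h : i < n + 1 then s ⟨i, h⟩ else if i = n + 1 then 1 else 0
      with he
    have he1 : e (n + 1) = 1 := by simp [he]
    have he2 : e (n + 2) = 0 := by simp [he]
    have hpre : X ⁻¹' {s} = {ω : ℕ → ℕ | ∀ i ≤ n, ω i = e i} := by
      ext ω
      simp only [hX, Set.mem_preimage, Set.mem_singleton_iff, Set.mem_ofPred_eq, funext_iff]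
      constructor
      · intro h i hi
        have hi' := Nat.lt_succ_iff.2 hi
        simpa [he, hi] using h ⟨i, hi'⟩
      · intro h i
        simpa [he, Nat.lt_succ_iff.1 i.2] using h i (Nat.lt_succ_iff.1 i.2)
    have hpreB : X ⁻¹' {s} ∩ B = {ω : ℕ → ℕ | ∀ i ≤ n + 2, ω i = e i} := by
      rw [hpre]
      ext ω
      simp only [Set.mem_inter_iff, Set.mem_ofPred_eq, hB]
      constructor
      · rintro ⟨h, h1, h2⟩ i hi
        rcases Nat.lt_or_ge n i with hlt | hle
        · obtain rfl | rfl : i = n + 1 ∨ i = n + 2 := by omega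
          · rw [h1, he1]
          · rw [h2, he2]
        · exact h i hle
      · intro h
        exact ⟨fun i hi => h i (by omega), (h _ (by omega)).trans he1, (h _ le_rfl).trans he2⟩
    rw [MeasureTheory.Measure.restrict_apply (hXm MeasurableSet.of_discrete), hpreB, hpre, hchain,
      hchain, ← ENNReal.ofReal_mul (by positivity), Finset.prod_range_succ, Finset.prod_range_succ]
    simp only [he1, he2]
    refine ENNReal.ofReal_le_ofReal ?_
    by_cases hp : e 0 = p
    swap
    · simp [hp]
    by_cases hprod : ∏ i ∈ Finset.range n, K (e i) (e (i + 1)) = 0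
    · simp [hprod]
    have hle := path_le_of_prod_ne_zero hK e n hprod
    have hen : 1 ≤ e n := by
      have : e n ≠ 0 := by simpa [he] using hs ⟨n, n.lt_succ_self⟩
      omega
    have hcle : c / (p + 2 * n + 1) ≤ K (e n) 1 * K 1 0 := by
      refine le_trans ?_ (hcK (e n) hen)
      have : (e n : ℝ) ≤ p + 2 * n := by rw [hp] at hle; exact_mod_cast hle
      gcongr
    have hpos : 0 ≤ ∏ i ∈ Finset.range n, K (e i) (e (i + 1)) :=
      Finset.prod_nonneg fun i _ => hnn _ _
    simp only [hp, if_true, one_mul]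
    calc _ ≤ (K (e n) 1 * K 1 0) * ∏ i ∈ Finset.range n, K (e i) (e (i + 1)) := by gcongr
      _ = _ := by ring
  have hkill : ENNReal.ofReal (c / (p + 2 * n + 1)) * μ (aliveUpTo n) ≤ μ (aliveUpTo n ∩ B) := by
    rw [← MeasureTheory.Measure.restrict_apply (measurableSet_aliveUpTo n), halive,
      ← MeasureTheory.tsum_measure_preimage_singleton S.to_countable
        (fun y _ => hXm MeasurableSet.of_discrete),
      ← MeasureTheory.tsum_measure_preimage_singleton S.to_countable
        (fun y _ => hXm MeasurableSet.of_discrete), ← ENNReal.tsum_mul_left]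
    exact ENNReal.tsum_le_tsum fun s => hcyl s s.2
  have hkill' : c / (p + 2 * n + 1) * μ.real (aliveUpTo n) ≤ μ.real (aliveUpTo n ∩ B) := by
    have h := ENNReal.toReal_mono (MeasureTheory.measure_ne_top _ _) hkill
    rwa [ENNReal.toReal_mul, ENNReal.toReal_ofReal (by positivity)] at h
  have hsub : aliveUpTo (n + 2) ⊆ aliveUpTo n \ B := fun ω hω =>
    ⟨fun i hi => hω i (by omega), fun hωB => hω (n + 2) le_rfl hωB.2⟩
  have h1 : μ.real (aliveUpTo (n + 2)) ≤ μ.real (aliveUpTo n \ B) :=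
    MeasureTheory.measureReal_mono hsub
  have h2 := MeasureTheory.measureReal_inter_add_sdiff (μ := μ) (s := aliveUpTo n) hBm
  linarith

theorem one_sub_div_le_rpow {c x : ℝ} (hc : 0 ≤ c) (hx : 0 < x) :
    1 - c / x ≤ (x / (x + 4)) ^ (c / 4) := by
  have h4 : 0 < x + 4 := by positivity
  rw [Real.rpow_def_of_pos (by positivity)]
  have hlog : -(4 / x) ≤ Real.log (x / (x + 4)) := by
    have h := Real.one_sub_inv_le_log_of_pos (x := x / (x + 4)) (by positivity)
    refine le_trans (le_of_eq ?_) h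
    field_simp
    ring
  have hmul : -(c / x) ≤ Real.log (x / (x + 4)) * (c / 4) := by
    have := mul_le_mul_of_nonneg_right hlog (by positivity : 0 ≤ c / 4)
    refine le_trans (le_of_eq ?_) this
    field_simp
  linarith [Real.add_one_le_exp (Real.log (x / (x + 4)) * (c / 4))]

theorem measure_aliveUpTo_two_mul_le [MeasureTheory.IsProbabilityMeasure μ]
    (hnn : ∀ p q, 0 ≤ K p q) (hK : ∀ p q, p + 2 < q → K p q = 0)
    {c : ℝ} (hc : 0 ≤ c) (hcK : ∀ p : ℕ, 1 ≤ p → c / (p + 1) ≤ K p 1 * K 1 0)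
    (hchain : ∀ n : ℕ, ∀ s : ℕ → ℕ, μ {ω : ℕ → ℕ | ∀ i ≤ n, ω i = s i}
        = ENNReal.ofReal ((if s 0 = p then 1 else 0)
            * ∏ i ∈ Finset.range n, K (s i) (s (i + 1)))) (j : ℕ) :
    μ.real (aliveUpTo (2 * j)) ≤ ((p + 1 : ℝ) / (p + 1 + 4 * j)) ^ (c / 4) := by
  induction j with
  | zero =>
    have : (p + 1 : ℝ) ≠ 0 := by positivity
    simp [this]
  | succ j ih =>
    have h1 := measure_aliveUpTo_add_two_le hnn hK hc hcK hchain (2 * j)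
    have h2 := one_sub_div_le_rpow hc (x := p + 1 + 4 * j) (by positivity)
    calc μ.real (aliveUpTo (2 * (j + 1)))
        ≤ (1 - c / (p + 1 + 4 * j)) * μ.real (aliveUpTo (2 * j)) := by
          refine h1.trans_eq ?_
          push_cast
          ring_nf
      _ ≤ ((p + 1 + 4 * j : ℝ) / (p + 1 + 4 * j + 4)) ^ (c / 4)
            * ((p + 1 : ℝ) / (p + 1 + 4 * j)) ^ (c / 4) := by
          gcongr
      _ = ((p + 1 : ℝ) / (p + 1 + 4 * (j + 1 : ℕ))) ^ (c / 4) := by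
          rw [← Real.mul_rpow (by positivity) (by positivity)]
          congr 1
          push_cast
          field_simp
          ring

/-- Polynomial tail of the absorption time of the chain, on the scale of the starting point. -/
theorem measure_survival_le [MeasureTheory.IsProbabilityMeasure μ]
    (hnn : ∀ p q, 0 ≤ K p q) (hK : ∀ p q, p + 2 < q → K p q = 0)
    {c : ℝ} (hc : 0 < c) (hcK : ∀ p : ℕ, 1 ≤ p → c / (p + 1) ≤ K p 1 * K 1 0)
    (hchain : ∀ n : ℕ, ∀ s : ℕ → ℕ, μ {ω : ℕ → ℕ | ∀ i ≤ n, ω i = s i}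
        = ENNReal.ofReal ((if s 0 = p then 1 else 0)
            * ∏ i ∈ Finset.range n, K (s i) (s (i + 1)))) (hp : 1 ≤ p)
    {γ : ℝ} (hγ : 0 < γ) (hγc : γ ≤ c / 12) (hγK : γ ≤ K 1 0) {r : ℝ} (hr : 0 < r) :
    μ {ω : ℕ → ℕ | ∀ n : ℕ, (n : ℝ) ≤ r * p → ω n ≠ 0} ≤ ENNReal.ofReal (r ^ (-γ)) := by
  have hp' : (1 : ℝ) ≤ p := by exact_mod_cast hp
  rcases le_or_gt r 1 with hr1 | hr1
  · refine MeasureTheory.prob_le_one.trans ?_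
    rw [← ENNReal.ofReal_one]
    exact ENNReal.ofReal_le_ofReal (Real.one_le_rpow_of_pos_of_le_one_of_nonpos hr hr1 (by linarith))
  have hfin : ∀ s : Set (ℕ → ℕ), μ s ≠ ⊤ := fun s => MeasureTheory.measure_ne_top _ _
  rw [ENNReal.le_ofReal_iff_toReal_le (hfin _) (by positivity)]
  set N := ⌊r * p⌋₊ with hN
  have hNle : (N : ℝ) ≤ r * p := Nat.floor_le (by positivity)
  have hNlt : r * p < N + 1 := Nat.lt_floor_add_one _
  have hsub : ∀ m ≤ N, {ω : ℕ → ℕ | ∀ n : ℕ, (n : ℝ) ≤ r * p → ω n ≠ 0} ⊆ aliveUpTo m := by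
    intro m hm ω hω i hi
    exact hω i (le_trans (by exact_mod_cast hi.trans hm) hNle)
  have hN1 : 1 ≤ N := Nat.le_floor (by push_cast; nlinarith)
  rcases Nat.lt_or_ge N 2 with hN2 | hN2
  · obtain rfl : p = 1 := by
      by_contra hne
      have h2 : (2 : ℝ) ≤ p := by exact_mod_cast (show 2 ≤ p by omega)
      have : 2 ≤ N := Nat.le_floor (by push_cast; nlinarith)
      omega
    have hNeq : N = 1 := by omega
    have hr2 : r < 2 := by rw [hNeq] at hNlt; norm_num at hNlt; exact hNlt
    have hcyl := hchain 1 fun i => if i = 0 then 1 else 0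
    simp only [Finset.prod_range_one] at hcyl
    have hdisj : μ.real (aliveUpTo 1)
        + μ.real {ω : ℕ → ℕ | ∀ i ≤ 1, ω i = if i = 0 then 1 else 0} ≤ 1 := by
      rw [← MeasureTheory.measureReal_union' _ (measurableSet_aliveUpTo 1)]
      · exact MeasureTheory.measureReal_le_one
      · refine Set.disjoint_left.2 fun ω h1 h2 => h1 1 le_rfl ?_
        simpa using h2 1 le_rfl
    have hval : μ.real {ω : ℕ → ℕ | ∀ i ≤ 1, ω i = if i = 0 then 1 else 0} = K 1 0 := by
      rw [MeasureTheory.measureReal_def, hcyl]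
      simp [hnn]
    have hstep : μ.real {ω : ℕ → ℕ | ∀ n : ℕ, (n : ℝ) ≤ r * (1 : ℕ) → ω n ≠ 0} ≤ 1 - γ := by
      have := MeasureTheory.measureReal_mono (μ := μ) (hsub 1 hN1)
      linarith
    refine hstep.trans ?_
    have hlog : Real.log r ≤ 1 := by linarith [Real.log_le_sub_one_of_pos hr]
    rw [Real.rpow_def_of_pos hr]
    have := Real.add_one_le_exp (Real.log r * -γ)
    nlinarith
  · set j := N / 2 with hj
    have hjN : 2 * j ≤ N := by omega
    have h1 := MeasureTheory.measureReal_mono (μ := μ) (hsub (2 * j) hjN)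
    have h2 := measure_aliveUpTo_two_mul_le hnn hK hc.le hcK hchain j
    refine (h1.trans h2).trans ?_
    have hjr : 2 / 3 * (r * p) ≤ 4 * j := by
      have : 2 * (N + 1) ≤ 3 * (4 * j) := by omega
      have : (2 * (N + 1) : ℝ) ≤ 3 * (4 * j) := by exact_mod_cast this
      linarith
    have hbase : (p + 1 : ℝ) / (p + 1 + 4 * j) ≤ (1 + r / 3)⁻¹ := by
      rw [inv_eq_one_div, div_le_div_iff₀ (by positivity) (by positivity)]
      nlinarith
    have hbern : r ^ ((1 : ℝ) / 3) ≤ 1 + r / 3 := by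
      have h := rpow_one_add_le_one_add_mul_self (s := r - 1) (by linarith)
        (p := (1 : ℝ) / 3) (by norm_num) (by norm_num)
      rw [add_sub_cancel] at h
      linarith
    calc ((p + 1 : ℝ) / (p + 1 + 4 * j)) ^ (c / 4) ≤ ((r ^ ((1 : ℝ) / 3))⁻¹) ^ (c / 4) := by
          refine Real.rpow_le_rpow (by positivity) (hbase.trans ?_) (by positivity)
          exact inv_anti₀ (by positivity) hbern
      _ = r ^ (-(c / 12)) := by
          rw [← Real.rpow_neg hr.le, ← Real.rpow_mul hr.le]
          congr 1
          ring
      _ ≤ r ^ (-γ) := Real.rpow_le_rpow_of_exponent_le hr1.le (by linarith)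

end Chain

section Kernel

variable {z : ℕ → ℕ → ℝ} {a : ℕ → ℝ}

/-- The transition weight from `p ≥ 1` to `q`. -/
noncomputable def kernelWeight (z : ℕ → ℕ → ℝ) (a : ℕ → ℝ) (p q : ℕ) : ℝ :=
  (if q = p + 2 then tc * (a (p + 2) / a p) * uc else 0)
      + (if q = p + 1 then
          (∑' k : ℕ, tc * (a (p + 1) / a p) * z 1 k * uc ^ (k + 1))
            + tc * z 1 0 * (a (p + 1) / a p) * uc else 0)
      + (if q = p then
          nuc * tc / uc + (∑' k : ℕ, nuc * tc * z 0 (k + 1) * uc ^ k)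
            + nuc * tc * z 0 1 else 0)
      + (∑ k ∈ Finset.Icc 1 p, if q = p - k + 1 then
          tc * z (k + 1) 0 * (a (p - k + 1) / a p) * uc else 0)
      + (∑ k ∈ Finset.Icc 1 p, if q = p - k then
          nuc * tc * z k 1 * (a (p - k) / a p) else 0)
      + (if q = 1 then ∑' k : ℕ, tc * z (p + 1) (k + 1) * (a 1 / a p) * uc ^ (k + 2) else 0)
      + (if q = 0 then ∑' k : ℕ, nuc * tc * z p (k + 2) * (a 0 / a p) * uc ^ (k + 1) else 0)

theorem ite_tsum_nonneg {P : Prop} [Decidable P] {f : ℕ → ℝ} (hf : ∀ k, 0 ≤ f k) :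
    0 ≤ if P then ∑' k, f k else 0 := by
  split_ifs
  exacts [tsum_nonneg hf, le_rfl]

theorem kernelWeight_ge (hz : ∀ p q, 0 ≤ z p q) (ha : ∀ p, 0 < a p) (p q : ℕ) :
    (∑ k ∈ Finset.Icc 1 p, if q = p - k + 1 then
        tc * z (k + 1) 0 * (a (p - k + 1) / a p) * uc else 0)
      + (∑ k ∈ Finset.Icc 1 p, if q = p - k then
        nuc * tc * z k 1 * (a (p - k) / a p) else 0) ≤ kernelWeight z a p q := by
  have htc := tc_pos.le
  have huc := uc_pos.le
  have hnuc := nuc_pos.le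
  have ha' : ∀ p, 0 ≤ a p := fun p => (ha p).le
  have hd : ∀ p q, 0 ≤ a p / a q := fun p q => div_nonneg (ha' p) (ha' q)
  have h1 : 0 ≤ if q = p + 2 then tc * (a (p + 2) / a p) * uc else 0 := by
    have := hd (p + 2) p
    split_ifs <;> positivity
  have h2 : 0 ≤ if q = p + 1 then
      (∑' k : ℕ, tc * (a (p + 1) / a p) * z 1 k * uc ^ (k + 1))
        + tc * z 1 0 * (a (p + 1) / a p) * uc else 0 := by
    have h := hd (p + 1) p
    split_ifs
    · have h10 := hz 1 0
      exact add_nonneg (tsum_nonneg fun k => by have := hz 1 k; positivity) (by positivity)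
    · exact le_rfl
  have h3 : 0 ≤ if q = p then
      nuc * tc / uc + (∑' k : ℕ, nuc * tc * z 0 (k + 1) * uc ^ k) + nuc * tc * z 0 1 else 0 := by
    split_ifs
    · have h01 := hz 0 1
      exact add_nonneg (add_nonneg (by positivity)
        (tsum_nonneg fun k => by have := hz 0 (k + 1); positivity)) (by positivity)
    · exact le_rfl
  have h4 : 0 ≤ if q = 1 then
      ∑' k : ℕ, tc * z (p + 1) (k + 1) * (a 1 / a p) * uc ^ (k + 2) else 0 :=
    ite_tsum_nonneg fun k => by have := hz (p + 1) (k + 1); have := hd 1 p; positivity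
  have h5 : 0 ≤ if q = 0 then
      ∑' k : ℕ, nuc * tc * z p (k + 2) * (a 0 / a p) * uc ^ (k + 1) else 0 :=
    ite_tsum_nonneg fun k => by have := hz p (k + 2); have := hd 0 p; positivity
  unfold kernelWeight
  linarith

theorem sum_up_nonneg (hz : ∀ p q, 0 ≤ z p q) (ha : ∀ p, 0 < a p) (p q : ℕ) (k : ℕ) :
    0 ≤ if q = p - k + 1 then tc * z (k + 1) 0 * (a (p - k + 1) / a p) * uc else 0 := by
  have := tc_pos
  have := uc_pos
  have := hz (k + 1) 0
  have := div_pos (ha (p - k + 1)) (ha p)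
  split_ifs <;> positivity

theorem sum_down_nonneg (hz : ∀ p q, 0 ≤ z p q) (ha : ∀ p, 0 < a p) (p q : ℕ) (k : ℕ) :
    0 ≤ if q = p - k then nuc * tc * z k 1 * (a (p - k) / a p) else 0 := by
  have := tc_pos
  have := nuc_pos
  have := hz k 1
  have := div_pos (ha (p - k)) (ha p)
  split_ifs <;> positivity

theorem kernelWeight_nonneg (hz : ∀ p q, 0 ≤ z p q) (ha : ∀ p, 0 < a p) (p q : ℕ) :
    0 ≤ kernelWeight z a p q :=
  (add_nonneg (Finset.sum_nonneg fun k _ => sum_up_nonneg hz ha p q k)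
    (Finset.sum_nonneg fun k _ => sum_down_nonneg hz ha p q k)).trans (kernelWeight_ge hz ha p q)

theorem le_kernelWeight_one (hz : ∀ p q, 0 ≤ z p q) (ha : ∀ p, 0 < a p) (p : ℕ) (hp : 1 ≤ p) :
    tc * z (p + 1) 0 * (a 1 / a p) * uc ≤ kernelWeight z a p 1 := by
  refine le_trans ?_ (kernelWeight_ge hz ha p 1)
  have h1 := Finset.single_le_sum (fun k _ => sum_up_nonneg hz ha p 1 k)
    (Finset.mem_Icc.2 ⟨hp, le_rfl⟩)
  have h2 := Finset.sum_nonneg fun k (_ : k ∈ Finset.Icc 1 p) => sum_down_nonneg hz ha p 1 k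
  simp only [Nat.sub_self, zero_add, if_true] at h1
  exact h1.trans (le_add_of_nonneg_right h2)

theorem le_kernelWeight_zero (hz : ∀ p q, 0 ≤ z p q) (ha : ∀ p, 0 < a p) (p : ℕ) (hp : 1 ≤ p) :
    nuc * tc * z p 1 * (a 0 / a p) ≤ kernelWeight z a p 0 := by
  refine le_trans ?_ (kernelWeight_ge hz ha p 0)
  have h1 := Finset.single_le_sum (fun k _ => sum_down_nonneg hz ha p 0 k)
    (Finset.mem_Icc.2 ⟨hp, le_rfl⟩)
  have h2 := Finset.sum_nonneg fun k (_ : k ∈ Finset.Icc 1 p) => sum_up_nonneg hz ha p 0 k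
  simp only [Nat.sub_self, if_true] at h1
  exact h1.trans (le_add_of_nonneg_left h2)

end Kernel

/-- there is `γ₀ > 0` such that the hitting time `T₀` of `0` by the chain
`(P_n)` started from `p ≥ 1` satisfies `ℙ_p(T₀ > Λp) ≤ Λ^{−γ₀}` for all `Λ > 0`; in
particular `T₀ < ∞` almost surely. -/
theorem statement13
    (ρ : ℝ) (hρ : 0 < ρ)
    (z : ℕ → ℕ → ℝ) (hz_nonneg : ∀ p q, 0 ≤ z p q)
    -- `z p 0` are the Taylor coefficients of `Z₀ = Ẑ₀ ∘ û⁻¹` at `0`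
    (hz0 : ∀ H : ℂ, ‖H‖ < ρ →
      HasSum (fun p : ℕ => (z p 0 : ℂ) * uhat H ^ p) (Z0hat H))
    -- `z p q` are the Taylor coefficients at `(0,0)` of the solution `Z(u,v)` of the
    -- algebraic equation, expressed through the parametrization `u = û(H)`, `v = û(K)`
    (hZ : ∀ H K : ℂ, ‖H‖ < ρ → ‖K‖ < ρ → ∃ ZHK : ℂ,
      HasSum (fun pq : ℕ × ℕ => (z pq.1 pq.2 : ℂ) * uhat H ^ pq.1 * uhat K ^ pq.2) ZHK ∧
      ((nuc : ℂ) * uhat K * uhat H - uhat H ^ 2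
          - ((nuc : ℂ) ^ 2 - 1) * (tc : ℂ) * uhat K * (Z0hat H + uhat H * Z1hat K))
          * (ZHK - Z0hat K)
        = uhat H ^ 2 * (Z0hat K - Z0hat H)
          + ((nuc : ℂ) ^ 2 - 1) * uhat H * uhat K * (uhat H ^ 2 - (tc : ℂ) * Z0hat H * Z1hat K))
    (a : ℕ → ℝ) (ha_pos : ∀ p, 0 < a p)
    -- `a p` are the Taylor coefficients of `A = Â ∘ û⁻¹` at `0`
    (hA : ∀ H : ℂ, ‖H‖ < ρ →
      HasSum (fun p : ℕ => (a p : ℂ) * uhat H ^ p) (Ahat H))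
    -- the transition kernel of the Markov chain `(P_n)`; the state `0` is absorbing
    (K : ℕ → ℕ → ℝ)
    (hK0 : ∀ q : ℕ, K 0 q = if q = 0 then 1 else 0)
    (hK : ∀ p : ℕ, 1 ≤ p → ∀ q : ℕ, K p q =
      (if q = p + 2 then tc * (a (p + 2) / a p) * uc else 0)
      + (if q = p + 1 then
          (∑' k : ℕ, tc * (a (p + 1) / a p) * z 1 k * uc ^ (k + 1))
            + tc * z 1 0 * (a (p + 1) / a p) * uc else 0)
      + (if q = p then
          nuc * tc / uc + (∑' k : ℕ, nuc * tc * z 0 (k + 1) * uc ^ k)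
            + nuc * tc * z 0 1 else 0)
      + (∑ k ∈ Finset.Icc 1 p, if q = p - k + 1 then
          tc * z (k + 1) 0 * (a (p - k + 1) / a p) * uc else 0)
      + (∑ k ∈ Finset.Icc 1 p, if q = p - k then
          nuc * tc * z k 1 * (a (p - k) / a p) else 0)
      + (if q = 1 then ∑' k : ℕ, tc * z (p + 1) (k + 1) * (a 1 / a p) * uc ^ (k + 2) else 0)
      + (if q = 0 then ∑' k : ℕ, nuc * tc * z p (k + 2) * (a 0 / a p) * uc ^ (k + 1) else 0))
    -- `Pm p` is the law of the trajectory of the chain started from `p`,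
    -- determined by its finite-dimensional (cylinder) distributions
    (Pm : ℕ → MeasureTheory.Measure (ℕ → ℕ))
    (hprob : ∀ p, MeasureTheory.IsProbabilityMeasure (Pm p))
    (hchain : ∀ p n : ℕ, ∀ s : ℕ → ℕ,
      Pm p {ω : ℕ → ℕ | ∀ i ≤ n, ω i = s i}
        = ENNReal.ofReal ((if s 0 = p then 1 else 0)
            * ∏ i ∈ Finset.range n, K (s i) (s (i + 1))))
    :
    ∃ γ₀ : ℝ, 0 < γ₀ ∧
      (∀ p : ℕ, 1 ≤ p → ∀ Λ : ℝ, 0 < Λ →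
        Pm p {ω : ℕ → ℕ | ∀ n : ℕ, (n : ℝ) ≤ Λ * p → ω n ≠ 0}
          ≤ ENNReal.ofReal (Λ ^ (-γ₀))) ∧
      (∀ p : ℕ, 1 ≤ p → Pm p {ω : ℕ → ℕ | ∃ n : ℕ, ω n = 0} = 1) := by
  have htc := tc_pos
  have huc := uc_pos
  have hnuc := nuc_pos
  replace hK : ∀ p : ℕ, 1 ≤ p → ∀ q : ℕ, K p q = kernelWeight z a p q := hK
  have hball : ∀ᶠ x : ℝ in 𝓝[≠] (0 : ℝ), ‖(x : ℂ)‖ < ρ := by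
    refine eventually_nhdsWithin_of_eventually_nhds ?_
    filter_upwards [Metric.ball_mem_nhds (0 : ℝ) hρ] with x hx
    simpa using hx
  have hz0R : ∀ᶠ x in 𝓝[≠] (0 : ℝ), HasSum (fun n => z n 0 * uReal x ^ n) (Z0Real x) := by
    filter_upwards [hball] with x hx
    have h := hz0 x hx
    rw [uhat_ofReal, Z0hat_ofReal] at h
    exact_mod_cast h
  have hAR : ∀ᶠ x in 𝓝[≠] (0 : ℝ), HasSum (fun n => a n * uReal x ^ n) (AReal x) := by
    filter_upwards [hball] with x hx
    have h := hA x hx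
    rw [uhat_ofReal, Ahat_ofReal] at h
    exact_mod_cast h
  have hz11 : 0 < z 1 1 := by
    refine coeff_one_pos (b := z 1) ?_
    filter_upwards [hball, eventually_uReal_ne_zero] with y hy hy0
    refine hasSum_coeff_one hy0 ?_
    filter_upwards [hball] with x hx
    obtain ⟨Z, hsum, heq⟩ := hZ x y hx hy
    simp only [uhat_ofReal, Z0hat_ofReal, Z1hat_ofReal] at hsum heq
    have hre : HasSum (fun pq : ℕ × ℕ => z pq.1 pq.2 * uReal x ^ pq.1 * uReal y ^ pq.2) Z.re := by
      have h := Complex.reCLM.hasSum hsum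
      convert! h using 2 with pq
      simp only [Complex.reCLM_apply]
      exact_mod_cast (Complex.ofReal_re _).symm
    have hZre : Z = (Z.re : ℂ) := by
      refine hsum.unique ?_
      exact_mod_cast hre
    refine ⟨Z.re, hre, ?_⟩
    rw [hZre] at heq
    exact_mod_cast heq
  obtain ⟨c, hc, hca⟩ := exists_mul_coeff_le hz0R hAR
  have hnn : ∀ p q, 0 ≤ K p q := by
    intro p q
    rcases Nat.eq_zero_or_pos p with rfl | hp
    · rw [hK0]; split_ifs <;> norm_num
    · rw [hK p hp q]
      exact kernelWeight_nonneg hz_nonneg ha_pos p q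
  have hbig : ∀ p q, p + 2 < q → K p q = 0 := by
    intro p q hpq
    rcases Nat.eq_zero_or_pos p with rfl | hp
    · rw [hK0, if_neg (by omega)]
    · rw [hK p hp q, kernelWeight, if_neg (by omega), if_neg (by omega), if_neg (by omega),
        if_neg (by omega), if_neg (by omega),
        Finset.sum_eq_zero fun k hk => if_neg (by have := Finset.mem_Icc.1 hk; omega),
        Finset.sum_eq_zero fun k hk => if_neg (by have := Finset.mem_Icc.1 hk; omega)]
      simp
  have hK1 : ∀ p : ℕ, 1 ≤ p → tc * uc * a 1 * c / (p + 1) ≤ K p 1 := by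
    intro p hp
    have h1 := le_kernelWeight_one hz_nonneg ha_pos p hp
    rw [← hK p hp 1] at h1
    refine le_trans ?_ h1
    have h2 := hca p hp
    have ha := ha_pos p
    have ha1 := ha_pos 1
    have h3 : c / (p + 1) ≤ z (p + 1) 0 / a p := by
      rw [div_le_div_iff₀ (by positivity) ha]
      linarith
    calc tc * uc * a 1 * c / (p + 1) = tc * uc * a 1 * (c / (p + 1)) := by ring
      _ ≤ tc * uc * a 1 * (z (p + 1) 0 / a p) := by gcongr
      _ = _ := by ring
  have hK10 : 0 < K 1 0 := by
    have h1 := le_kernelWeight_zero hz_nonneg ha_pos 1 le_rfl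
    rw [← hK 1 le_rfl 0] at h1
    have ha0 := ha_pos 0
    have ha1 := ha_pos 1
    exact lt_of_lt_of_le (by positivity) h1
  set c' : ℝ := tc * uc * a 1 * c * K 1 0 with hc'
  have hc'pos : 0 < c' := by have := ha_pos 1; positivity
  have hcK : ∀ p : ℕ, 1 ≤ p → c' / (p + 1) ≤ K p 1 * K 1 0 := by
    intro p hp
    have h := mul_le_mul_of_nonneg_right (hK1 p hp) hK10.le
    refine le_trans (le_of_eq ?_) h
    rw [hc']
    ring
  set γ : ℝ := min (c' / 12) (K 1 0) with hγ
  have hγpos : 0 < γ := by positivity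
  have htail : ∀ p : ℕ, 1 ≤ p → ∀ r : ℝ, 0 < r →
      Pm p {ω : ℕ → ℕ | ∀ n : ℕ, (n : ℝ) ≤ r * p → ω n ≠ 0} ≤ ENNReal.ofReal (r ^ (-γ)) := by
    intro p hp r hr
    have := hprob p
    exact measure_survival_le hnn hbig hc'pos hcK (hchain p) hp hγpos (min_le_left _ _)
      (min_le_right _ _) hr
  refine ⟨γ, hγpos, htail, fun p hp => ?_⟩
  have := hprob p
  have hlim : Tendsto (fun r : ℝ => ENNReal.ofReal (r ^ (-γ))) atTop (𝓝 0) := by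
    simpa using ENNReal.tendsto_ofReal (tendsto_rpow_neg_atTop hγpos)
  have hzero : Pm p {ω : ℕ → ℕ | ∃ n : ℕ, ω n = 0}ᶜ = 0 := by
    refine nonpos_iff_eq_zero.1 (ge_of_tendsto hlim ?_)
    filter_upwards [eventually_gt_atTop 0] with r hr
    refine le_trans (MeasureTheory.measure_mono ?_) (htail p hp r hr)
    intro ω hω n _ hn
    exact hω ⟨n, hn⟩
  have hmeas : MeasurableSet {ω : ℕ → ℕ | ∃ n : ℕ, ω n = 0} := by
    have h : {ω : ℕ → ℕ | ∃ n : ℕ, ω n = 0} = ⋃ n, (fun ω : ℕ → ℕ => ω n) ⁻¹' {0} := by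
      ext ω
      simp
    rw [h]
    exact .iUnion fun n => measurable_pi_apply n MeasurableSet.of_discrete
  exact (MeasureTheory.prob_compl_eq_zero_iff hmeas).1 hzero
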